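/- arXiv:2411.04031 — 7 statements merged into one kernel-verified Lean document; each statement's English description precedes it below -/
import Mathlib

section
/- Every truth-conditional formula φ of L_⟹ is logically equivalent to a declarative; in particular, φ is equivalent to the declarative φ^! obtained by recursively replacing each occurrence of ⩔ not within the scope of ⟹ by the defined declarative disjunction ∨ (where φ^! = φ for atoms, ⊥ and modal formulas, (φ∧ψ)^! = φ^!∧ψ^!, (φ⩔ψ)^! = φ^!∨ψ^!, (φ→ψ)^! = φ^!→ψ^!). -/
/-- Formulas of the inquisitive modal language `L_⟹`. -/
inductive Form (P : Type) : Type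
  | atom : P → Form P
  | bot : Form P
  | and : Form P → Form P → Form P
  | impl : Form P → Form P → Form P
  | idisj : Form P → Form P → Form P
  | yields : Form P → Form P → Form P

/-- An inhabited neighborhood model (in-model). -/
structure InModel (P : Type) where
  W : Type
  ne : Nonempty W
  Nb : W → Set (Set W)
  nb_nonempty : ∀ w, ∀ s ∈ Nb w, s.Nonempty
  V : W → P → Bool

/-- Support of a formula at an information state. -/
def support {P : Type} (M : InModel P) : Form P → Set M.W → Prop
  | .atom p, s => ∀ w ∈ s, M.V w p = true
  | .bot, s => s = ∅
  | .and φ ψ, s => support M φ s ∧ support M ψ s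
  | .impl φ ψ, s => ∀ t : Set M.W, t ⊆ s → support M φ t → support M ψ t
  | .idisj φ ψ, s => support M φ s ∨ support M ψ s
  | .yields φ ψ, s => ∀ w ∈ s, ∀ t ∈ M.Nb w, support M φ t → support M ψ t

/-- Truth at a world: support at the corresponding singleton state. -/
def truth {P : Type} (M : InModel P) (w : M.W) (φ : Form P) : Prop :=
  support M φ {w}

/-- A formula is truth-conditional if support at any state amounts to truth at
every world of the state. -/
def TruthConditional {P : Type} (φ : Form P) : Prop :=
  ∀ (M : InModel P) (s : Set M.W), support M φ s ↔ ∀ w ∈ s, truth M w φ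

/-- Logical equivalence: same supporting states in every in-model. -/
def EquivF {P : Type} (φ ψ : Form P) : Prop :=
  ∀ (M : InModel P) (s : Set M.W), support M φ s ↔ support M ψ s

def Form.neg {P : Type} (φ : Form P) : Form P := .impl φ .bot
def Form.top {P : Type} : Form P := Form.neg .bot
def Form.or {P : Type} (φ ψ : Form P) : Form P := Form.neg (.and (Form.neg φ) (Form.neg ψ))
def Form.box {P : Type} (φ : Form P) : Form P := .yields Form.top φ
def Form.dia {P : Type} (φ : Form P) : Form P := Form.neg (.yields φ .bot)
def Form.quest {P : Type} (φ : Form P) : Form P := .idisj φ (Form.neg φ)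

/-- Declaratives: formulas where `⩔` occurs only within the scope of `⟹`. -/
inductive IsDecl {P : Type} : Form P → Prop
  | atom (p : P) : IsDecl (.atom p)
  | bot : IsDecl .bot
  | and {α β : Form P} : IsDecl α → IsDecl β → IsDecl (.and α β)
  | impl {α β : Form P} : IsDecl α → IsDecl β → IsDecl (.impl α β)
  | yields (φ ψ : Form P) : IsDecl (.yields φ ψ)

/-- The declarative variant `φ^!` of a formula. -/
def declOf {P : Type} : Form P → Form P
  | .atom p => .atom p
  | .bot => .bot
  | .and φ ψ => .and (declOf φ) (declOf ψ)
  | .impl φ ψ => .impl (declOf φ) (declOf ψ)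
  | .idisj φ ψ => Form.or (declOf φ) (declOf ψ)
  | .yields φ ψ => .yields φ ψ

theorem support_empty {P : Type} (M : InModel P) (φ : Form P) : support M φ ∅ := by
  induction φ with
  | atom p => simp [support]
  | bot => simp [support]
  | and φ ψ h1 h2 => exact ⟨h1, h2⟩
  | impl φ ψ h1 h2 =>
    intro t ht _
    rw [Set.subset_empty_iff.mp ht]
    exact h2
  | idisj φ ψ h1 h2 => exact Or.inl h1
  | yields φ ψ h1 h2 => simp [support]

theorem support_mono {P : Type} (M : InModel P) (φ : Form P) :
    ∀ s t : Set M.W, t ⊆ s → support M φ s → support M φ t := by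
  induction φ with
  | atom p => exact fun s t h hs w hw => hs w (h hw)
  | bot =>
    intro s t h hs
    have hs' : s = ∅ := hs
    subst hs'
    exact Set.subset_empty_iff.mp h
  | and φ ψ h1 h2 => exact fun s t h hs => ⟨h1 s t h hs.1, h2 s t h hs.2⟩
  | impl φ ψ h1 h2 => exact fun s t h hs u hu => hs u (hu.trans h)
  | idisj φ ψ h1 h2 => exact fun s t h hs => hs.imp (h1 s t h) (h2 s t h)
  | yields φ ψ h1 h2 => exact fun s t h hs w hw => hs w (h hw)

theorem support_impl_singleton {P : Type} (M : InModel P) (φ ψ : Form P) (w : M.W) :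
    support M (.impl φ ψ) {w} ↔ (support M φ {w} → support M ψ {w}) := by
  constructor
  · exact fun h => h {w} subset_rfl
  · intro h t ht hs
    rcases Set.subset_singleton_iff_eq.mp ht with rfl | rfl
    · exact support_empty M ψ
    · exact h hs

theorem support_bot_singleton {P : Type} (M : InModel P) (w : M.W) :
    ¬ support M (.bot : Form P) {w} := by
  simp [support]

theorem IsDecl.truthConditional {P : Type} {α : Form P} (h : IsDecl α) :
    TruthConditional α := by
  intro M
  induction h with
  | atom p => intro s; simp [support, truth]
  | bot => intro s; simp [support, truth, Set.eq_empty_iff_forall_notMem]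
  | and _ _ h1 h2 =>
    intro s
    simp only [support, truth] at *
    rw [h1 s, h2 s]
    exact forall₂_and.symm
  | @impl α β _ _ h1 h2 =>
    intro s
    constructor
    · exact fun hs w hw => support_mono M _ s {w} (by simpa using hw) hs
    · intro h t ht hα
      rw [h2 t]
      intro w hw
      exact (support_impl_singleton M α β w).mp (h w (ht hw)) ((h1 t).mp hα w hw)
  | yields φ ψ => intro s; simp [support, truth]

theorem isDecl_declOf {P : Type} (φ : Form P) : IsDecl (declOf φ) := by
  induction φ with
  | atom p => exact .atom p
  | bot => exact .bot
  | and φ ψ h1 h2 => exact .and h1 h2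
  | impl φ ψ h1 h2 => exact .impl h1 h2
  | idisj φ ψ h1 h2 => exact .impl (.and (.impl h1 .bot) (.impl h2 .bot)) .bot
  | yields φ ψ h1 h2 => exact .yields φ ψ

theorem support_declOf_singleton {P : Type} (M : InModel P) (φ : Form P) (w : M.W) :
    support M (declOf φ) {w} ↔ support M φ {w} := by
  induction φ with
  | atom p => rfl
  | bot => rfl
  | and φ ψ h1 h2 => exact and_congr h1 h2
  | impl φ ψ h1 h2 =>
    rw [declOf, support_impl_singleton, support_impl_singleton, h1, h2]
  | idisj φ ψ h1 h2 =>
    have hb := support_bot_singleton M w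
    have e : support M (.and (Form.neg (declOf φ)) (Form.neg (declOf ψ))) {w} ↔
        support M (Form.neg (declOf φ)) {w} ∧ support M (Form.neg (declOf ψ)) {w} := Iff.rfl
    have e2 : support M (.idisj φ ψ) {w} ↔ support M φ {w} ∨ support M ψ {w} := Iff.rfl
    rw [declOf, Form.or, Form.neg, support_impl_singleton, e, Form.neg, Form.neg,
      support_impl_singleton, support_impl_singleton, h1, h2, e2]
    tauto
  | yields φ ψ h1 h2 => rfl

/-- every truth-conditional formula is equivalent to a declarative,
in particular to its declarative variant `φ^!`. -/
theorem truthConditional_equiv_declOf {P : Type} (φ : Form P)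
    (hφ : TruthConditional φ) : IsDecl (declOf φ) ∧ EquivF φ (declOf φ) := by
  refine ⟨isDecl_declOf φ, fun M s => ?_⟩
  rw [hφ M s, (isDecl_declOf φ).truthConditional M s]
  exact forall₂_congr fun w _ => (support_declOf_singleton M φ w).symm
end

section
/- (Normal form) For every formula φ of L_⟹, if R(φ) = {α₁,…,αₙ} is the set of resolutions of φ, then φ is logically equivalent to the inquisitive disjunction α₁ ⩔ … ⩔ αₙ. -/
def bigAnd {P : Type} : List (Form P) → Form P
  | [] => Form.top
  | [φ] => φ
  | φ :: rest => .and φ (bigAnd rest)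

def bigIdisj {P : Type} : List (Form P) → Form P
  | [] => .bot
  | [φ] => φ
  | φ :: rest => .idisj φ (bigIdisj rest)

/-- All ways of choosing one element from each list in a list of lists. -/
def choices {α : Type} : List (List α) → List (List α)
  | [] => [[]]
  | l :: ls => l.flatMap (fun a => (choices ls).map (fun c => a :: c))

/-- The resolutions of a formula (as a list). -/
def res {P : Type} : Form P → List (Form P)
  | .atom p => [.atom p]
  | .bot => [.bot]
  | .yields φ ψ => [.yields φ ψ]
  | .and φ ψ =>
      let rφ := res φ; let rψ := res ψ
      rφ.flatMap (fun a => rψ.map (fun b => .and a b))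
  | .idisj φ ψ => res φ ++ res ψ
  | .impl φ ψ =>
      let rφ := res φ; let rψ := res ψ
      (choices (rφ.map (fun a => rψ.map (fun b => Form.impl a b)))).map bigAnd

theorem decl_support {P : Type} (M : InModel P) {φ : Form P} (hd : IsDecl φ) :
    ∀ s : Set M.W, (∀ w ∈ s, support M φ {w}) → support M φ s := by
  induction hd with
  | atom p => intro s h w hw; exact h w hw w rfl
  | bot =>
    intro s h
    simp only [support] at h ⊢
    exact Set.eq_empty_of_forall_notMem fun w hw => Set.singleton_ne_empty w (h w hw)
  | and _ _ ih1 ih2 =>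
    intro s h
    exact ⟨ih1 s fun w hw => (h w hw).1, ih2 s fun w hw => (h w hw).2⟩
  | impl _ _ ih1 ih2 =>
    intro s h t ht hta
    refine ih2 t fun w hw => h w (ht hw) {w} subset_rfl ?_
    exact support_mono M _ t _ (Set.singleton_subset_iff.mpr hw) hta
  | yields φ ψ => intro s h w hw; exact h w hw w rfl

theorem support_bigAnd {P : Type} (M : InModel P) (s : Set M.W) :
    ∀ l : List (Form P), support M (bigAnd l) s ↔ ∀ a ∈ l, support M a s
  | [] => by simp [bigAnd, Form.top, Form.neg, support]
  | [a] => by simp [bigAnd]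
  | a :: b :: l => by
    have := support_bigAnd M s (b :: l)
    simp only [bigAnd, support, this, List.forall_mem_cons]

theorem support_bigIdisj {P : Type} (M : InModel P) (s : Set M.W) :
    ∀ l : List (Form P), l ≠ [] → (support M (bigIdisj l) s ↔ ∃ a ∈ l, support M a s)
  | [], h => absurd rfl h
  | [a], _ => by simp [bigIdisj]
  | a :: b :: l, _ => by
    have := support_bigIdisj M s (b :: l) (by simp)
    simp only [bigIdisj, support, this, List.mem_cons (a := _) (b := a), or_and_right,
      exists_or, exists_eq_left]

theorem exists_choices {α : Type} (p : α → Prop) (L : List (List α)) :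
    (∃ c ∈ choices L, ∀ x ∈ c, p x) ↔ ∀ l ∈ L, ∃ x ∈ l, p x := by
  induction L with
  | nil => simp [choices]
  | cons l L ih =>
    rw [List.forall_mem_cons, ← ih]
    simp only [choices, List.mem_flatMap, List.mem_map]
    constructor
    · rintro ⟨_, ⟨a, ha, c, hc, rfl⟩, h⟩
      rw [List.forall_mem_cons] at h
      exact ⟨⟨a, ha, h.1⟩, c, hc, h.2⟩
    · rintro ⟨⟨a, ha, h⟩, c, hc, h2⟩
      exact ⟨_, ⟨a, ha, c, hc, rfl⟩, List.forall_mem_cons.mpr ⟨h, h2⟩⟩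

theorem choices_mem {α : Type} (p : α → Prop) (L : List (List α))
    (h : ∀ l ∈ L, ∀ x ∈ l, p x) : ∀ c ∈ choices L, ∀ x ∈ c, p x := by
  induction L with
  | nil => simp [choices]
  | cons l L ih =>
    rw [List.forall_mem_cons] at h
    simp only [choices, List.mem_flatMap, List.mem_map]
    rintro _ ⟨a, ha, c, hc, rfl⟩
    exact List.forall_mem_cons.mpr ⟨h.1 a ha, ih h.2 c hc⟩

theorem isDecl_bigAnd {P : Type} :
    ∀ l : List (Form P), (∀ a ∈ l, IsDecl a) → IsDecl (bigAnd l)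
  | [], _ => IsDecl.impl IsDecl.bot IsDecl.bot
  | [a], h => h a (by simp)
  | a :: b :: l, h => by
    rw [List.forall_mem_cons] at h
    exact IsDecl.and h.1 (isDecl_bigAnd (b :: l) h.2)

theorem res_decl {P : Type} (φ : Form P) : ∀ a ∈ res φ, IsDecl a := by
  induction φ with
  | atom p => simpa [res] using IsDecl.atom p
  | bot => simpa [res] using IsDecl.bot
  | and φ ψ ih1 ih2 =>
    simp only [res, List.mem_flatMap, List.mem_map]
    rintro _ ⟨a, ha, b, hb, rfl⟩
    exact IsDecl.and (ih1 a ha) (ih2 b hb)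
  | impl φ ψ ih1 ih2 =>
    simp only [res, List.mem_map]
    rintro _ ⟨c, hc, rfl⟩
    refine isDecl_bigAnd c (choices_mem _ _ ?_ c hc)
    simp only [List.mem_map]
    rintro _ ⟨a, ha, rfl⟩ x hx
    obtain ⟨b, hb, rfl⟩ := List.mem_map.mp hx
    exact IsDecl.impl (ih1 a ha) (ih2 b hb)
  | idisj φ ψ ih1 ih2 =>
    intro a ha
    exact (List.mem_append.mp ha).elim (ih1 a) (ih2 a)
  | yields φ ψ ih1 ih2 => simpa [res] using IsDecl.yields φ ψ

theorem res_ne_nil {P : Type} (φ : Form P) : res φ ≠ [] := by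
  induction φ with
  | atom p => simp [res]
  | bot => simp [res]
  | and φ ψ ih1 ih2 =>
    obtain ⟨a, ha⟩ := List.exists_mem_of_ne_nil _ ih1
    obtain ⟨b, hb⟩ := List.exists_mem_of_ne_nil _ ih2
    apply List.ne_nil_of_mem (a := Form.and a b)
    simp only [res, List.mem_flatMap, List.mem_map]
    exact ⟨a, ha, b, hb, rfl⟩
  | impl φ ψ ih1 ih2 =>
    obtain ⟨b, hb⟩ := List.exists_mem_of_ne_nil _ ih2
    obtain ⟨c, hc, -⟩ := (exists_choices (fun _ => True)
      ((res φ).map (fun a => (res ψ).map (fun b => Form.impl a b)))).mpr (by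
        intro l hl
        obtain ⟨a, ha, rfl⟩ := List.mem_map.mp hl
        exact ⟨_, List.mem_map.mpr ⟨b, hb, rfl⟩, trivial⟩)
    exact List.ne_nil_of_mem (List.mem_map.mpr ⟨c, hc, rfl⟩)
  | idisj φ ψ ih1 ih2 => simp [res, ih1]
  | yields φ ψ ih1 ih2 => simp [res]

theorem exists_map_mem {α β : Type} (f : α → β) (l : List α) (p : β → Prop) :
    (∃ x ∈ l.map f, p x) ↔ ∃ a ∈ l, p (f a) := by
  constructor
  · rintro ⟨x, hx, h⟩
    obtain ⟨a, ha, rfl⟩ := List.mem_map.mp hx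
    exact ⟨a, ha, h⟩
  · rintro ⟨a, ha, h⟩
    exact ⟨_, List.mem_map.mpr ⟨a, ha, rfl⟩, h⟩

theorem support_res {P : Type} (M : InModel P) (φ : Form P) :
    ∀ s : Set M.W, support M φ s ↔ ∃ a ∈ res φ, support M a s := by
  induction φ with
  | atom p => simp [res]
  | bot => simp [res]
  | and φ ψ ih1 ih2 =>
    intro s
    simp only [res, List.mem_flatMap, List.mem_map]
    constructor
    · rintro ⟨h1, h2⟩
      obtain ⟨a, ha, h1⟩ := (ih1 s).mp h1
      obtain ⟨b, hb, h2⟩ := (ih2 s).mp h2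
      exact ⟨_, ⟨a, ha, b, hb, rfl⟩, h1, h2⟩
    · rintro ⟨_, ⟨a, ha, b, hb, rfl⟩, h1, h2⟩
      exact ⟨(ih1 s).mpr ⟨a, ha, h1⟩, (ih2 s).mpr ⟨b, hb, h2⟩⟩
  | impl φ ψ ih1 ih2 =>
    intro s
    have key : (∃ x ∈ res (Form.impl φ ψ), support M x s) ↔
        ∀ a ∈ res φ, ∃ b ∈ res ψ, support M (Form.impl a b) s := by
      have := exists_choices (fun x => support M x s)
        ((res φ).map (fun a => (res ψ).map (fun b => Form.impl a b)))
      simp only [res, exists_map_mem, List.forall_mem_map, support_bigAnd] at this ⊢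
      exact this
    rw [key]
    constructor
    · intro h a ha
      have hs : support M a {w ∈ s | support M a {w}} :=
        decl_support M (res_decl φ a ha) _ fun w hw => hw.2
      have h2 := h _ (fun w hw => hw.1) ((ih1 _).mpr ⟨a, ha, hs⟩)
      obtain ⟨b, hb, h3⟩ := (ih2 _).mp h2
      refine ⟨b, hb, fun t ht hta => support_mono M b _ t (fun w hw => ?_) h3⟩
      exact ⟨ht hw, support_mono M a t _ (Set.singleton_subset_iff.mpr hw) hta⟩
    · intro h t ht hφ
      obtain ⟨a, ha, h1⟩ := (ih1 t).mp hφ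
      obtain ⟨b, hb, h2⟩ := h a ha
      exact (ih2 t).mpr ⟨b, hb, h2 t ht h1⟩
  | idisj φ ψ ih1 ih2 =>
    intro s
    simp only [res, support, ih1 s, ih2 s, List.mem_append, or_and_right, exists_or]
  | yields φ ψ ih1 ih2 => simp [res]

/-- normal form — every formula is equivalent to the inquisitive
disjunction of its resolutions. -/
theorem normal_form {P : Type} (φ : Form P) : EquivF φ (bigIdisj (res φ)) := by
  intro M s
  rw [support_bigIdisj M s _ (res_ne_nil φ)]
  exact support_res M φ s
end

section
/- For any formulas φ, ψ of L_⟹, the formula ⟐(φ⩔ψ) is logically equivalent to ⟐φ ∨ ⟐ψ. -/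
theorem neg_support_iff {P : Type} (M : InModel P) (α : Form P)
    (hp : ∀ s t : Set M.W, t ⊆ s → support M α s → support M α t) (s : Set M.W) :
    support M (Form.neg α) s ↔ ∀ w ∈ s, ¬ support M α {w} := by
  simp only [Form.neg, support]
  constructor
  · intro h w hw hα
    exact Set.singleton_ne_empty w (h {w} (Set.singleton_subset_iff.2 hw) hα)
  · intro h t hts hα
    refine Set.eq_empty_of_forall_notMem fun w hw => ?_
    exact h w (hts hw) (hp t {w} (Set.singleton_subset_iff.2 hw) hα)

theorem neg_support_mono {P : Type} (M : InModel P) (α : Form P) (s t : Set M.W)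
    (hts : t ⊆ s) (h : support M (Form.neg α) s) : support M (Form.neg α) t := by
  simp only [Form.neg, support] at h ⊢
  exact fun u hu => h u (hu.trans hts)

theorem dia_support_iff {P : Type} (M : InModel P) (φ : Form P) (s : Set M.W) :
    support M (Form.dia φ) s ↔ ∀ w ∈ s, ∃ t ∈ M.Nb w, support M φ t := by
  unfold Form.dia
  rw [neg_support_iff]
  · refine forall₂_congr fun w _ => ?_
    simp only [support, Set.mem_singleton_iff, forall_eq]
    constructor
    · intro h
      by_contra hc
      exact h fun t ht hφ => absurd ⟨t, ht, hφ⟩ hc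
    · rintro ⟨t, ht, hφ⟩ h
      exact (M.nb_nonempty w t ht).ne_empty (h t ht hφ)
  · intro s t hts h
    simp only [support] at h ⊢
    exact fun w hw => h w (hts hw)

/-- `⟐` distributes over inquisitive disjunction as declarative
disjunction. -/
theorem dia_idisj {P : Type} (φ ψ : Form P) :
    EquivF (Form.dia (.idisj φ ψ)) (Form.or (Form.dia φ) (Form.dia ψ)) := by
  intro M s
  unfold Form.or
  rw [dia_support_iff, neg_support_iff]
  · refine forall₂_congr fun w _ => ?_
    have hn : ∀ χ : Form P, support M (Form.neg (Form.dia χ)) {w} ↔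
        ¬ ∃ t ∈ M.Nb w, support M χ t := by
      intro χ
      rw [neg_support_iff]
      · simp only [dia_support_iff, Set.mem_singleton_iff, forall_eq]
      · exact neg_support_mono M _
    simp only [support, hn, ← not_or, not_not]
    simp only [and_or_left, exists_or]
  · intro s t hts h
    exact ⟨neg_support_mono M _ s t hts h.1, neg_support_mono M _ s t hts h.2⟩
end

section
/- (Expressivity gap) The formula p⟹q is not convex-invariant; hence no formula of the fragment L_⊞⟐ (and a fortiori no formula of L_⊞ or of L_⟐) is logically equivalent to p⟹q. The formula ⊞?p is not union-invariant; hence no formula of the fragment L_⟹! is logically equivalent to ⊞?p. Consequently L_⟹ is strictly more expressive than each of L_⟐, L_⊞, L_⊞⟐, L_⟹!. -/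
/-- The fragment `L_⟐`. -/
inductive InLdia {P : Type} : Form P → Prop
  | atom (p : P) : InLdia (.atom p)
  | bot : InLdia .bot
  | and {φ ψ : Form P} : InLdia φ → InLdia ψ → InLdia (.and φ ψ)
  | impl {φ ψ : Form P} : InLdia φ → InLdia ψ → InLdia (.impl φ ψ)
  | idisj {φ ψ : Form P} : InLdia φ → InLdia ψ → InLdia (.idisj φ ψ)
  | dia {φ : Form P} : InLdia φ → InLdia (Form.dia φ)

/-- The fragment `L_⊞`. -/
inductive InLbox {P : Type} : Form P → Prop
  | atom (p : P) : InLbox (.atom p)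
  | bot : InLbox .bot
  | and {φ ψ : Form P} : InLbox φ → InLbox ψ → InLbox (.and φ ψ)
  | impl {φ ψ : Form P} : InLbox φ → InLbox ψ → InLbox (.impl φ ψ)
  | idisj {φ ψ : Form P} : InLbox φ → InLbox ψ → InLbox (.idisj φ ψ)
  | box {φ : Form P} : InLbox φ → InLbox (Form.box φ)

/-- The fragment `L_⊞⟐`. -/
inductive InLboxdia {P : Type} : Form P → Prop
  | atom (p : P) : InLboxdia (.atom p)
  | bot : InLboxdia .bot
  | and {φ ψ : Form P} : InLboxdia φ → InLboxdia ψ → InLboxdia (.and φ ψ)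
  | impl {φ ψ : Form P} : InLboxdia φ → InLboxdia ψ → InLboxdia (.impl φ ψ)
  | idisj {φ ψ : Form P} : InLboxdia φ → InLboxdia ψ → InLboxdia (.idisj φ ψ)
  | box {φ : Form P} : InLboxdia φ → InLboxdia (Form.box φ)
  | dia {φ : Form P} : InLboxdia φ → InLboxdia (Form.dia φ)

/-- The fragment `L_⟹!`: every modal subformula has the form `φ ⟹ α` with `α`
a declarative. -/
inductive InLyd {P : Type} : Form P → Prop
  | atom (p : P) : InLyd (.atom p)
  | bot : InLyd .bot
  | and {φ ψ : Form P} : InLyd φ → InLyd ψ → InLyd (.and φ ψ)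
  | impl {φ ψ : Form P} : InLyd φ → InLyd ψ → InLyd (.impl φ ψ)
  | idisj {φ ψ : Form P} : InLyd φ → InLyd ψ → InLyd (.idisj φ ψ)
  | yields {φ α : Form P} : InLyd φ → InLyd α → IsDecl α → InLyd (.yields φ α)

/-- Upward closure `M^↑`. -/
def InModel.up {P : Type} (M : InModel P) : InModel P where
  W := M.W
  ne := M.ne
  Nb := fun w => {t | t.Nonempty ∧ ∃ s ∈ M.Nb w, s ⊆ t}
  nb_nonempty := fun _ _ hs => hs.1
  V := M.V

/-- Downward closure `M^↓`. -/
def InModel.down {P : Type} (M : InModel P) : InModel P where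
  W := M.W
  ne := M.ne
  Nb := fun w => {t | t.Nonempty ∧ ∃ s ∈ M.Nb w, t ⊆ s}
  nb_nonempty := fun _ _ hs => hs.1
  V := M.V

/-- Convex closure `M^↕`. -/
def InModel.conv {P : Type} (M : InModel P) : InModel P where
  W := M.W
  ne := M.ne
  Nb := fun w => {t | t.Nonempty ∧ ∃ s ∈ M.Nb w, ∃ s' ∈ M.Nb w, s ⊆ t ∧ t ⊆ s'}
  nb_nonempty := fun _ _ hs => hs.1
  V := M.V

/-- Union closure `M^∪`. -/
def InModel.uni {P : Type} (M : InModel P) : InModel P where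
  W := M.W
  ne := M.ne
  Nb := fun w => {t | t.Nonempty ∧ ∃ S ⊆ M.Nb w, t = ⋃₀ S}
  nb_nonempty := fun _ _ hs => hs.1
  V := M.V

def UpInvariant {P : Type} (φ : Form P) : Prop :=
  ∀ (M : InModel P) (s : Set M.W), support M φ s ↔ support M.up φ s

def DownInvariant {P : Type} (φ : Form P) : Prop :=
  ∀ (M : InModel P) (s : Set M.W), support M φ s ↔ support M.down φ s

def ConvexInvariant {P : Type} (φ : Form P) : Prop :=
  ∀ (M : InModel P) (s : Set M.W), support M φ s ↔ support M.conv φ s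

def UnionInvariant {P : Type} (φ : Form P) : Prop :=
  ∀ (M : InModel P) (s : Set M.W), support M φ s ↔ support M.uni φ s

section Helpers
variable {P : Type}

theorem gap_persist (M : InModel P) (φ : Form P) :
    ∀ s t : Set M.W, t ⊆ s → support M φ s → support M φ t := by
  induction φ with
  | atom p => intro s t h hs w hw; exact hs w (h hw)
  | bot =>
    intro s t h hs
    have hs' : s = ∅ := hs
    subst hs'
    exact Set.subset_empty_iff.mp h
  | and a b iha ihb => intro s t h hs; exact ⟨iha s t h hs.1, ihb s t h hs.2⟩
  | impl a b iha ihb => intro s t h hs u hu; exact hs u (hu.trans h)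
  | idisj a b iha ihb =>
    intro s t h hs
    rcases hs with hs | hs
    · exact Or.inl (iha s t h hs)
    · exact Or.inr (ihb s t h hs)
  | yields a b iha ihb => intro s t h hs w hw; exact hs w (h hw)

/-- Support of declaratives is preserved under unions. -/
theorem gap_decl_sUnion (M : InModel P) {α : Form P} (hα : IsDecl α) :
    ∀ s : Set M.W, (∀ w ∈ s, support M α {w}) → support M α s := by
  induction hα with
  | atom p => intro s h w hw; exact h w hw w rfl
  | bot =>
    intro s h
    refine Set.eq_empty_of_forall_notMem fun w hw => ?_
    exact Set.singleton_ne_empty w (h w hw)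
  | and _ _ iha ihb =>
    intro s h
    exact ⟨iha s fun w hw => (h w hw).1, ihb s fun w hw => (h w hw).2⟩
  | impl _ _ iha ihb =>
    intro s h t hts ht
    refine ihb t fun w hw => ?_
    exact h w (hts hw) {w} subset_rfl
      (gap_persist M _ t {w} (Set.singleton_subset_iff.mpr hw) ht)
  | yields a b => intro s h w hw; exact h w hw w rfl

theorem gap_top (M : InModel P) (s : Set M.W) : support M Form.top s :=
  fun _ _ h => h

theorem gap_box (M : InModel P) (φ : Form P) (s : Set M.W) :
    support M (Form.box φ) s ↔ ∀ w ∈ s, ∀ t ∈ M.Nb w, support M φ t :=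
  ⟨fun h w hw t ht => h w hw t ht (gap_top M t), fun h w hw t ht _ => h w hw t ht⟩

theorem gap_conv_nb (M : InModel P) (w : M.W) (t : Set M.W) (h : t ∈ M.Nb w) :
    t ∈ M.conv.Nb w :=
  ⟨M.nb_nonempty w t h, t, h, t, h, subset_rfl, subset_rfl⟩

theorem gap_uni_nb (M : InModel P) (w : M.W) (t : Set M.W) (h : t ∈ M.Nb w) :
    t ∈ M.uni.Nb w :=
  ⟨M.nb_nonempty w t h, {t}, Set.singleton_subset_iff.mpr h, (Set.sUnion_singleton t).symm⟩

theorem gap_conv (M : InModel P) {φ : Form P} (h : InLboxdia φ) :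
    ∀ s : Set M.W, support M φ s ↔ support M.conv φ s := by
  induction h with
  | atom p => intro s; exact Iff.rfl
  | bot => intro s; exact Iff.rfl
  | and _ _ iha ihb => intro s; exact and_congr (iha s) (ihb s)
  | impl _ _ iha ihb =>
    intro s
    exact forall_congr' fun t => imp_congr Iff.rfl (imp_congr (iha t) (ihb t))
  | idisj _ _ iha ihb => intro s; exact or_congr (iha s) (ihb s)
  | @box φ _ ih =>
    intro s
    rw [gap_box]
    refine Iff.trans ?_ (gap_box M.conv φ s).symm
    constructor
    · rintro h w hw t ⟨_, _, _, s', hs', _, hts⟩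
      exact (ih t).1 (gap_persist M φ s' t hts (h w hw s' hs'))
    · intro h w hw t ht
      exact (ih t).2 (h w hw t (gap_conv_nb M w t ht))
  | @dia φ _ ih =>
    intro s
    have key : ∀ u : Set M.W, support M (.yields φ .bot) u ↔
        support M.conv (.yields φ .bot) u := by
      intro u
      constructor
      · rintro h w hw t ⟨_, s', hs', _, _, hst, _⟩ ht
        have h1 : s' = ∅ := h w hw s' hs' (gap_persist M φ t s' hst ((ih t).2 ht))
        exact absurd h1 (M.nb_nonempty w s' hs').ne_empty
      · intro h w hw t ht hφ
        exact h w hw t (gap_conv_nb M w t ht) ((ih t).1 hφ)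
    exact forall_congr' fun t => imp_congr Iff.rfl (imp_congr (key t) Iff.rfl)

theorem gap_uni (M : InModel P) {φ : Form P} (h : InLyd φ) :
    ∀ s : Set M.W, support M φ s ↔ support M.uni φ s := by
  induction h with
  | atom p => intro s; exact Iff.rfl
  | bot => intro s; exact Iff.rfl
  | and _ _ iha ihb => intro s; exact and_congr (iha s) (ihb s)
  | impl _ _ iha ihb =>
    intro s
    exact forall_congr' fun t => imp_congr Iff.rfl (imp_congr (iha t) (ihb t))
  | idisj _ _ iha ihb => intro s; exact or_congr (iha s) (ihb s)
  | @yields φ α _ _ hα iha ihb =>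
    intro s
    constructor
    · rintro h w hw t ⟨_, S, hS, hts⟩ ht
      refine (ihb t).1 (gap_decl_sUnion M hα t fun v hv => ?_)
      have hv' : v ∈ ⋃₀ S := hts ▸ hv
      obtain ⟨u, hu, hvu⟩ := hv'
      have hut : u ⊆ t := fun x hx => hts ▸ (⟨u, hu, hx⟩ : x ∈ ⋃₀ S)
      exact gap_persist M α u {v} (Set.singleton_subset_iff.mpr hvu)
        (h w hw u (hS hu) (gap_persist M φ t u hut ((iha t).2 ht)))
    · intro h w hw t ht hφ
      exact (ihb t).2 (h w hw t (gap_uni_nb M w t ht) ((iha t).1 hφ))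

theorem gap_not_conv (p q : P) (hpq : p ≠ q) :
    ¬ ConvexInvariant (Form.yields (.atom p) (.atom q)) := by
  classical
  intro h
  let M : InModel P :=
    { W := Fin 3
      ne := ⟨0⟩
      Nb := fun _ => {{0}, Set.univ}
      nb_nonempty := by
        rintro w s (rfl | rfl)
        · exact ⟨0, rfl⟩
        · exact ⟨0, trivial⟩
      V := fun w r => decide (w = 0 ∨ (w = 1 ∧ r = p)) }
  have h1 : support M (Form.yields (.atom p) (.atom q)) (Set.univ : Set (Fin 3)) := by
    rintro w _ t (rfl | rfl) ht v hv
    · have hv' : v = (0 : Fin 3) := hv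
      subst hv'
      simp [M]
    · have h2 := ht (2 : Fin 3) trivial
      simp [M] at h2
  have h2 := (h M _).1 h1 (0 : Fin 3) trivial ({0, 1} : Set (Fin 3))
    ⟨⟨0, Or.inl rfl⟩, {0}, Or.inl rfl, Set.univ, Or.inr rfl,
      fun x hx => Or.inl hx, Set.subset_univ _⟩ (by
      rintro w (rfl | rfl)
      · simp [M, InModel.conv]
      · simp [M, InModel.conv])
  have h3 := h2 (1 : Fin 3) (Or.inr rfl)
  simp [M, InModel.conv, hpq.symm] at h3

theorem gap_not_uni (p : P) : ¬ UnionInvariant (Form.box (Form.quest (.atom p))) := by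
  intro h
  let M : InModel P :=
    { W := Bool
      ne := ⟨true⟩
      Nb := fun _ => {{true}, {false}}
      nb_nonempty := by
        rintro w s (rfl | rfl)
        · exact ⟨true, rfl⟩
        · exact ⟨false, rfl⟩
      V := fun w _ => w }
  have h1 : support M (Form.box (Form.quest (.atom p))) (Set.univ : Set Bool) := by
    rw [gap_box]
    rintro w _ t (rfl | rfl)
    · left
      rintro v hv
      exact hv
    · right
      intro t ht hp
      refine Set.eq_empty_of_forall_notMem fun v hv => ?_
      have h1 : v = false := ht hv
      have h2 : v = true := hp v hv
      exact Bool.false_ne_true (h1.symm.trans h2)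
  have h2 := (gap_box M.uni _ _).1 ((h M _).1 h1) true trivial (Set.univ : Set Bool)
    ⟨⟨true, trivial⟩, {{true}, {false}}, subset_rfl, by
      ext b
      cases b <;> simp⟩
  rcases h2 with h2 | h2
  · exact Bool.false_ne_true (h2 false trivial)
  · have h3 : ({true} : Set Bool) = ∅ := h2 {true} (Set.subset_univ _) (fun v hv => hv)
    exact Set.singleton_ne_empty true h3

theorem gap_box_sub {φ : Form P} (h : InLbox φ) : InLboxdia φ := by
  induction h with
  | atom p => exact .atom p
  | bot => exact .bot
  | and _ _ a b => exact .and a b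
  | impl _ _ a b => exact .impl a b
  | idisj _ _ a b => exact .idisj a b
  | box _ a => exact .box a

theorem gap_dia_sub {φ : Form P} (h : InLdia φ) : InLboxdia φ := by
  induction h with
  | atom p => exact .atom p
  | bot => exact .bot
  | and _ _ a b => exact .and a b
  | impl _ _ a b => exact .impl a b
  | idisj _ _ a b => exact .idisj a b
  | dia _ a => exact .dia a

end Helpers

/-- expressivity gap — `p ⟹ q` is not convex-invariant and hence
not expressible in `L_⊞⟐` (nor in `L_⊞` or `L_⟐`); `⊞?p` is not union-invariant
and hence not expressible in `L_⟹!`; consequently `L_⟹` is strictly more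
expressive than each of the fragments. -/
theorem expressivity_gap {P : Type} (p q : P) (hpq : p ≠ q) :
    (¬ ConvexInvariant (Form.yields (.atom p) (.atom q))) ∧
    (∀ φ : Form P, InLboxdia φ → ¬ EquivF φ (Form.yields (.atom p) (.atom q))) ∧
    (∀ φ : Form P, InLbox φ → ¬ EquivF φ (Form.yields (.atom p) (.atom q))) ∧
    (∀ φ : Form P, InLdia φ → ¬ EquivF φ (Form.yields (.atom p) (.atom q))) ∧
    (¬ UnionInvariant (Form.box (Form.quest (.atom p)))) ∧
    (∀ φ : Form P, InLyd φ → ¬ EquivF φ (Form.box (Form.quest (.atom p)))) ∧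
    (∃ χ : Form P, ∀ φ : Form P, InLdia φ → ¬ EquivF φ χ) ∧
    (∃ χ : Form P, ∀ φ : Form P, InLbox φ → ¬ EquivF φ χ) ∧
    (∃ χ : Form P, ∀ φ : Form P, InLboxdia φ → ¬ EquivF φ χ) ∧
    (∃ χ : Form P, ∀ φ : Form P, InLyd φ → ¬ EquivF φ χ) := by
  have hA : ∀ φ : Form P, InLboxdia φ → ¬ EquivF φ (Form.yields (.atom p) (.atom q)) := by
    intro φ hφ he
    exact gap_not_conv p q hpq fun M s =>
      ((he M s).symm.trans (gap_conv M hφ s)).trans (he M.conv s)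
  have hB : ∀ φ : Form P, InLyd φ → ¬ EquivF φ (Form.box (Form.quest (.atom p))) := by
    intro φ hφ he
    exact gap_not_uni p fun M s =>
      ((he M s).symm.trans (gap_uni M hφ s)).trans (he M.uni s)
  exact ⟨gap_not_conv p q hpq, hA, fun φ h => hA φ (gap_box_sub h),
    fun φ h => hA φ (gap_dia_sub h), gap_not_uni p, hB,
    ⟨_, fun φ h => hA φ (gap_dia_sub h)⟩, ⟨_, fun φ h => hA φ (gap_box_sub h)⟩,
    ⟨_, hA⟩, ⟨_, hB⟩⟩
end

section
/- (Definability of ⟹ from ⊞ over downward-monotone models) Let M be a downward-monotone in-model (i.e., every nonempty subset of a neighborhood is itself a neighborhood of the same world) and w a world in M. Then for any formulas φ, ψ of L_⟹: M,w ⊨ φ⟹ψ if and only if M,w ⊨ ⊞(φ→ψ). -/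
/-- A model is downward-monotone if every nonempty subset of a neighborhood is
itself a neighborhood of the same world. -/
def DownwardMonotone {P : Type} (M : InModel P) : Prop :=
  ∀ w : M.W, ∀ s ∈ M.Nb w, ∀ t : Set M.W, t ⊆ s → t.Nonempty → t ∈ M.Nb w

/-- over downward-monotone models, `⟹` is definable from `⊞`. -/
theorem yields_definable_from_box {P : Type} (M : InModel P)
    (hM : DownwardMonotone M) (w : M.W) (φ ψ : Form P) :
    truth M w (.yields φ ψ) ↔ truth M w (Form.box (.impl φ ψ)) := by
  constructor
  · intro h v hv s hs _ t hts hφ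
    rcases Set.eq_empty_or_nonempty t with rfl | hne
    · exact support_empty M ψ
    · exact h v hv t (hM v s hs t hts hne) hφ
  · intro h v hv t ht hφ
    exact h v hv t ht (fun _ _ hb => hb) t subset_rfl hφ
end

section
/- (n-bisimilarity implies n-modal equivalence) For every n ∈ ℕ: if two world-pointed in-models satisfy M,w ∼ₙ M',w', then they make true exactly the same formulas of L_⟹ of modal depth at most n; and if two state-pointed in-models satisfy M,s ∼ₙ M',s', then they support exactly the same formulas of L_⟹ of modal depth at most n. -/
/-- Modal depth. -/
def md {P : Type} : Form P → ℕ
  | .atom _ => 0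
  | .bot => 0
  | .and φ ψ => max (md φ) (md ψ)
  | .impl φ ψ => max (md φ) (md ψ)
  | .idisj φ ψ => max (md φ) (md ψ)
  | .yields φ ψ => max (md φ) (md ψ) + 1

/-- Egli-Milner lifting of a relation between worlds to states. -/
def EM {P : Type} {M M' : InModel P} (Z : M.W → M'.W → Prop)
    (s : Set M.W) (s' : Set M'.W) : Prop :=
  (∀ w ∈ s, ∃ w' ∈ s', Z w w') ∧ (∀ w' ∈ s', ∃ w ∈ s, Z w w')

/-- `Z` is an `n`-bisimulation between `M` and `M'` (indices `i ≤ n`). -/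
def IsNBisim {P : Type} (M M' : InModel P) (n : ℕ)
    (Z : ℕ → M.W → M'.W → Prop) : Prop :=
  ∀ i ≤ n, ∀ w w', Z i w w' →
    (∀ p : P, M.V w p = M'.V w' p) ∧
    (∀ j : ℕ, i = j + 1 →
      (∀ s ∈ M.Nb w, ∃ s' ∈ M'.Nb w', EM (Z j) s s') ∧
      (∀ s' ∈ M'.Nb w', ∃ s ∈ M.Nb w, EM (Z j) s s'))

/-- `n`-bisimilarity of world-pointed models. -/
def NBisimW {P : Type} (n : ℕ) (M : InModel P) (w : M.W)
    (M' : InModel P) (w' : M'.W) : Prop :=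
  ∃ Z, IsNBisim M M' n Z ∧ Z n w w'

/-- `n`-bisimilarity of state-pointed models. -/
def NBisimS {P : Type} (n : ℕ) (M : InModel P) (s : Set M.W)
    (M' : InModel P) (s' : Set M'.W) : Prop :=
  ∃ Z, IsNBisim M M' n Z ∧ EM (Z n) s s'

/-- `Z` is a bisimulation between `M` and `M'`. -/
def IsBisim {P : Type} (M M' : InModel P) (Z : M.W → M'.W → Prop) : Prop :=
  (∃ w w', Z w w') ∧
  ∀ w w', Z w w' →
    (∀ p : P, M.V w p = M'.V w' p) ∧
    (∀ s ∈ M.Nb w, ∃ s' ∈ M'.Nb w', EM Z s s') ∧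
    (∀ s' ∈ M'.Nb w', ∃ s ∈ M.Nb w, EM Z s s')

/-- Bisimilarity of world-pointed models. -/
def BisimW {P : Type} (M : InModel P) (w : M.W)
    (M' : InModel P) (w' : M'.W) : Prop :=
  ∃ Z, IsBisim M M' Z ∧ Z w w'

/-- Bisimilarity of state-pointed models. -/
def BisimS {P : Type} (M : InModel P) (s : Set M.W)
    (M' : InModel P) (s' : Set M'.W) : Prop :=
  ∃ Z, IsBisim M M' Z ∧ EM Z s s'

theorem support_iff_of_EM {P : Type} {M M' : InModel P} {n : ℕ}
    {Z : ℕ → M.W → M'.W → Prop} (hZ : IsNBisim M M' n Z) (φ : Form P) :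
    ∀ i ≤ n, md φ ≤ i → ∀ (s : Set M.W) (s' : Set M'.W), EM (Z i) s s' →
      (support M φ s ↔ support M' φ s') := by
  induction φ with
  | atom p =>
    intro i hi _ s s' h
    constructor
    · intro hs w' hw'
      obtain ⟨w, hw, hz⟩ := h.2 w' hw'
      rw [← (hZ i hi w w' hz).1 p]
      exact hs w hw
    · intro hs w hw
      obtain ⟨w', hw', hz⟩ := h.1 w hw
      rw [(hZ i hi w w' hz).1 p]
      exact hs w' hw'
  | bot =>
    intro i hi _ s s' h
    simp only [support, Set.eq_empty_iff_forall_notMem]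
    constructor
    · intro hs w' hw'
      obtain ⟨w, hw, _⟩ := h.2 w' hw'
      exact hs w hw
    · intro hs w hw
      obtain ⟨w', hw', _⟩ := h.1 w hw
      exact hs w' hw'
  | and φ ψ ih1 ih2 =>
    intro i hi hd s s' h
    have hd' := max_le_iff.1 hd
    exact and_congr (ih1 i hi hd'.1 s s' h) (ih2 i hi hd'.2 s s' h)
  | idisj φ ψ ih1 ih2 =>
    intro i hi hd s s' h
    have hd' := max_le_iff.1 hd
    exact or_congr (ih1 i hi hd'.1 s s' h) (ih2 i hi hd'.2 s s' h)
  | impl φ ψ ih1 ih2 =>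
    intro i hi hd s s' h
    have hd' := max_le_iff.1 hd
    constructor
    · intro hs t' ht' hφ
      have hem : EM (Z i) {w | w ∈ s ∧ ∃ w' ∈ t', Z i w w'} t' := by
        refine ⟨fun w hw => hw.2, fun w' hw' => ?_⟩
        obtain ⟨w, hw, hz⟩ := h.2 w' (ht' hw')
        exact ⟨w, ⟨hw, w', hw', hz⟩, hz⟩
      exact (ih2 i hi hd'.2 _ _ hem).1
        (hs _ (fun w hw => hw.1) ((ih1 i hi hd'.1 _ _ hem).2 hφ))
    · intro hs t ht hφ
      have hem : EM (Z i) t {w' | w' ∈ s' ∧ ∃ w ∈ t, Z i w w'} := by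
        refine ⟨fun w hw => ?_, fun w' hw' => hw'.2⟩
        obtain ⟨w', hw', hz⟩ := h.1 w (ht hw)
        exact ⟨w', ⟨hw', w, hw, hz⟩, hz⟩
      exact (ih2 i hi hd'.2 _ _ hem).2
        (hs _ (fun w hw => hw.1) ((ih1 i hi hd'.1 _ _ hem).1 hφ))
  | yields φ ψ ih1 ih2 =>
    intro i hi hd s s' h
    simp only [md] at hd
    obtain ⟨j, rfl⟩ : ∃ j, i = j + 1 := ⟨i - 1, by omega⟩
    have hd' := max_le_iff.1 (Nat.le_of_succ_le_succ hd)
    have hj : j ≤ n := by omega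
    constructor
    · intro hs w' hw' t' ht' hφ
      obtain ⟨w, hw, hz⟩ := h.2 w' hw'
      obtain ⟨t, ht, hem⟩ := ((hZ _ hi w w' hz).2 j rfl).2 t' ht'
      exact (ih2 j hj hd'.2 _ _ hem).1 (hs w hw t ht ((ih1 j hj hd'.1 _ _ hem).2 hφ))
    · intro hs w hw t ht hφ
      obtain ⟨w', hw', hz⟩ := h.1 w hw
      obtain ⟨t', ht', hem⟩ := ((hZ _ hi w w' hz).2 j rfl).1 t ht
      exact (ih2 j hj hd'.2 _ _ hem).2 (hs w' hw' t' ht' ((ih1 j hj hd'.1 _ _ hem).1 hφ))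

/-- `n`-bisimilarity implies `n`-modal equivalence, for worlds and
for states. -/
theorem nbisim_implies_modal_equiv {P : Type} (n : ℕ) :
    (∀ (M M' : InModel P) (w : M.W) (w' : M'.W), NBisimW n M w M' w' →
      ∀ φ : Form P, md φ ≤ n → (truth M w φ ↔ truth M' w' φ)) ∧
    (∀ (M M' : InModel P) (s : Set M.W) (s' : Set M'.W), NBisimS n M s M' s' →
      ∀ φ : Form P, md φ ≤ n → (support M φ s ↔ support M' φ s')) := by
  refine ⟨?_, ?_⟩
  · rintro M M' w w' ⟨Z, hZ, hz⟩ φ hd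
    refine support_iff_of_EM hZ φ n le_rfl hd _ _ ⟨?_, ?_⟩
    · rintro v rfl
      exact ⟨w', rfl, hz⟩
    · rintro v rfl
      exact ⟨w, rfl, hz⟩
  · rintro M M' s s' ⟨Z, hZ, hz⟩ φ hd
    exact support_iff_of_EM hZ φ n le_rfl hd _ _ hz
end

section
/- (n-modal equivalence implies n-bisimilarity) Assume the set P of atoms is finite and let n ∈ ℕ. If two world-pointed in-models ⟨M,w⟩ and ⟨M',w'⟩ make true the same formulas of L_⟹ of modal depth at most n, then M,w ∼ₙ M',w'. If two state-pointed in-models ⟨M,s⟩ and ⟨M',s'⟩ support the same formulas of L_⟹ of modal depth at most n, then M,s ∼ₙ M',s'. -/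
/-- The finite set of `n`-types. -/
def NTy (P : Type) : ℕ → Type
  | 0 => P → Bool
  | n + 1 => (P → Bool) × Set (Set (NTy P n))

instance NTy.fin {P : Type} [Finite P] : ∀ n, Finite (NTy P n)
  | 0 => inferInstanceAs (Finite (P → Bool))
  | n + 1 => by
    have := NTy.fin (P := P) n
    exact inferInstanceAs (Finite ((P → Bool) × Set (Set (NTy P n))))

/-- The `n`-type of a world. -/
def nty {P : Type} (M : InModel P) : (n : ℕ) → M.W → NTy P n
  | 0, w => M.V w
  | n + 1, w => (M.V w, {R | ∃ t ∈ M.Nb w, nty M n '' t = R})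

/-- World properties defined by a truth-conditional formula of depth at most `n`. -/
def WDef {P : Type} (n : ℕ) (A : (M : InModel P) → M.W → Prop) : Prop :=
  ∃ f : Form P, md f ≤ n ∧ ∀ M s, support M f s ↔ ∀ w ∈ s, A M w

/-- State properties defined by a formula of depth at most `n` on nonempty states. -/
def SDef {P : Type} (n : ℕ) (B : (M : InModel P) → Set M.W → Prop) : Prop :=
  ∃ f : Form P, md f ≤ n ∧ ∀ M s, s.Nonempty → (support M f s ↔ B M s)

theorem WDef.congr {P : Type} {n : ℕ} {A B : (M : InModel P) → M.W → Prop}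
    (h : WDef n A) (hAB : ∀ M w, A M w ↔ B M w) : WDef n B := by
  obtain ⟨f, h1, h2⟩ := h
  exact ⟨f, h1, fun M s => by simp only [h2, hAB]⟩

theorem WDef.not {P : Type} {n : ℕ} {A : (M : InModel P) → M.W → Prop}
    (h : WDef n A) : WDef n (fun M w => ¬ A M w) := by
  obtain ⟨f, h1, h2⟩ := h
  refine ⟨.impl f .bot, by simpa [md] using h1, fun M s => ?_⟩
  simp only [support, h2]
  constructor
  · intro h w hw hA
    have := h {w} (by simpa using hw) (by simpa using hA)
    simp at this
  · intro h t hts hA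
    by_contra hne
    obtain ⟨w, hw⟩ := Set.nonempty_iff_ne_empty.mpr hne
    exact h w (hts hw) (hA w hw)

theorem WDef.and {P : Type} {n : ℕ} {A B : (M : InModel P) → M.W → Prop}
    (h : WDef n A) (h' : WDef n B) : WDef n (fun M w => A M w ∧ B M w) := by
  obtain ⟨f, h1, h2⟩ := h
  obtain ⟨g, h3, h4⟩ := h'
  refine ⟨.and f g, by simp [md, h1, h3], fun M s => ?_⟩
  simp only [support, h2, h4]
  grind

theorem WDef.false {P : Type} {n : ℕ} : WDef (P := P) n (fun _ _ => False) :=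
  ⟨.bot, by simp [md], fun M s => by simp [support, Set.eq_empty_iff_forall_notMem]⟩

theorem WDef.true {P : Type} {n : ℕ} : WDef (P := P) n (fun _ _ => True) :=
  WDef.false.not.congr (by simp)

theorem WDef.all {P : Type} {n : ℕ} {ι : Type} [Finite ι]
    {A : ι → (M : InModel P) → M.W → Prop}
    (h : ∀ i, WDef n (A i)) : WDef n (fun M w => ∀ i, A i M w) := by
  classical
  have := Fintype.ofFinite ι
  have key : ∀ s : Finset ι, WDef n (fun M w => ∀ i ∈ s, A i M w) := by
    intro s
    induction s using Finset.induction_on with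
    | empty => exact WDef.true.congr (by simp)
    | insert a s _ ih => exact ((h a).and ih).congr (by simp)
  exact (key Finset.univ).congr (by simp)

theorem WDef.iff_const {P : Type} {n : ℕ} {A : (M : InModel P) → M.W → Prop}
    (h : WDef n A) (c : Prop) : WDef n (fun M w => c ↔ A M w) := by
  by_cases hc : c
  · exact h.congr (by simp [hc])
  · exact h.not.congr (by simp [hc])

theorem WDef.atom {P : Type} {n : ℕ} (p : P) :
    WDef n (fun (M : InModel P) w => M.V w p = Bool.true) :=
  ⟨.atom p, by simp [md], fun M s => by simp [support]⟩

theorem WDef.val {P : Type} [Finite P] {n : ℕ} (v : P → Bool) :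
    WDef n (fun (M : InModel P) w => M.V w = v) := by
  refine (WDef.all (fun p => (WDef.atom p).iff_const (v p = Bool.true))).congr ?_
  intro M w
  rw [funext_iff]
  refine forall_congr' fun p => ?_
  cases M.V w p <;> cases v p <;> simp

theorem SDef.exi {P : Type} {n : ℕ} {ι : Type} [Finite ι]
    {A : ι → (M : InModel P) → Set M.W → Prop}
    (h : ∀ i, SDef n (A i)) : SDef n (fun M w => ∃ i, A i M w) := by
  classical
  have := Fintype.ofFinite ι
  have key : ∀ s : Finset ι, SDef n (fun M w => ∃ i ∈ s, A i M w) := by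
    intro s
    induction s using Finset.induction_on with
    | empty =>
      exact ⟨.bot, by simp [md], fun M s hs => by simp [support, hs.ne_empty]⟩
    | insert a s _ ih =>
      obtain ⟨f, h1, h2⟩ := h a
      obtain ⟨g, h3, h4⟩ := ih
      refine ⟨.idisj f g, by simp [md, h1, h3], fun M s hs => ?_⟩
      simp [support, h2 M s hs, h4 M s hs]
  obtain ⟨f, h1, h2⟩ := key Finset.univ
  exact ⟨f, h1, fun M s hs => by simp [h2 M s hs]⟩

theorem WDef.mem_of_eq {P : Type} {n k : ℕ} [Finite P]
    (h : ∀ τ : NTy P k, WDef n (fun M w => nty M k w = τ)) (S : Set (NTy P k)) :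
    WDef n (fun M w => nty M k w ∈ S) := by
  refine (WDef.all (ι := S) (fun τ => (h τ.1).not)).not.congr ?_
  intro M w
  simp

theorem WDef.nbhd {P : Type} {n : ℕ} [Finite P]
    (h : ∀ S : Set (NTy P n), WDef n (fun M w => nty M n w ∈ S)) (R : Set (NTy P n)) :
    WDef (n + 1) (fun M w => ∃ t ∈ M.Nb w, nty M n '' t = R) := by
  obtain ⟨f, h1, h2⟩ := h R
  have hs : SDef n (fun (M : InModel P) s => ∃ τ : R, ∀ w ∈ s, nty M n w ∈ R \ {τ.1}) := by
    refine SDef.exi (fun τ => ?_)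
    obtain ⟨g, h3, h4⟩ := h (R \ {τ.1})
    exact ⟨g, h3, fun M s _ => h4 M s⟩
  obtain ⟨g, h3, h4⟩ := hs
  have : WDef (n + 1) (fun (M : InModel P) w => ¬ ∃ t ∈ M.Nb w, nty M n '' t = R) := by
    refine ⟨.yields f g, by simp [md, h1, h3], fun M s => ?_⟩
    simp only [support]
    refine forall₂_congr fun w hw => ?_
    push Not
    refine forall₂_congr fun t ht => ?_
    rw [h2, h4 M t (M.nb_nonempty w t ht)]
    constructor
    · intro H e
      obtain ⟨⟨τ, hτ⟩, H2⟩ := H (fun w hw => e ▸ Set.mem_image_of_mem _ hw)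
      rw [← e] at hτ
      obtain ⟨v, hv, rfl⟩ := hτ
      exact (H2 v hv).2 rfl
    · intro e H
      by_contra hc
      apply e
      apply Set.Subset.antisymm
      · rintro _ ⟨v, hv, rfl⟩
        exact H v hv
      · intro τ hτ
        by_contra hn
        exact hc ⟨⟨τ, hτ⟩, fun v hv => ⟨H v hv, fun e => hn ⟨v, hv, e⟩⟩⟩
  exact this.not.congr (by simp)

theorem WDef.nty_mem {P : Type} [Finite P] (n : ℕ) :
    ∀ S : Set (NTy P n), WDef n (fun M w => nty M n w ∈ S) := by
  induction n with
  | zero => exact WDef.mem_of_eq (fun τ => WDef.val τ)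
  | succ n ih =>
    refine WDef.mem_of_eq (fun τ => ?_)
    refine ((WDef.val τ.1).and
      (WDef.all (fun R => (WDef.nbhd ih R).iff_const (R ∈ τ.2)))).congr ?_
    intro M w
    obtain ⟨v, N⟩ := τ
    simp only [nty]
    refine Iff.trans (and_congr Iff.rfl ?_) Prod.mk_inj.symm
    rw [Set.ext_iff]
    exact forall_congr' fun R => ⟨fun h => h.symm, fun h => h.symm⟩

theorem EM_of_image {P : Type} {M M' : InModel P} {n : ℕ} {s : Set M.W} {s' : Set M'.W}
    (h : nty M n '' s = nty M' n '' s') :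
    EM (fun w w' => nty M n w = nty M' n w') s s' := by
  constructor
  · intro w hw
    obtain ⟨w', h1, h2⟩ := h ▸ Set.mem_image_of_mem (nty M n) hw
    exact ⟨w', h1, h2.symm⟩
  · intro w' hw
    obtain ⟨w, h1, h2⟩ := h.symm ▸ Set.mem_image_of_mem (nty M' n) hw
    exact ⟨w, h1, h2⟩

theorem nty_isNBisim {P : Type} (M M' : InModel P) (n : ℕ) :
    IsNBisim M M' n (fun i w w' => nty M i w = nty M' i w') := by
  intro i _ w w' h
  constructor
  · intro p
    cases i with
    | zero => exact congrFun h p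
    | succ i => exact congrFun (congrArg Prod.fst h) p
  · rintro j rfl
    have h2 := Set.ext_iff.mp (congrArg Prod.snd h)
    constructor
    · intro s hs
      obtain ⟨s', hs', e⟩ := (h2 (nty M j '' s)).1 ⟨s, hs, rfl⟩
      exact ⟨s', hs', EM_of_image e.symm⟩
    · intro s' hs'
      obtain ⟨s, hs, e⟩ := (h2 (nty M' j '' s')).2 ⟨s', hs', rfl⟩
      exact ⟨s, hs, EM_of_image e⟩

/-- over a finite set of atoms, `n`-modal equivalence implies
`n`-bisimilarity, for worlds and for states. -/
theorem modal_equiv_implies_nbisim {P : Type} [Fintype P] (n : ℕ) :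
    (∀ (M M' : InModel P) (w : M.W) (w' : M'.W),
      (∀ φ : Form P, md φ ≤ n → (truth M w φ ↔ truth M' w' φ)) →
      NBisimW n M w M' w') ∧
    (∀ (M M' : InModel P) (s : Set M.W) (s' : Set M'.W),
      (∀ φ : Form P, md φ ≤ n → (support M φ s ↔ support M' φ s')) →
      NBisimS n M s M' s') := by
  constructor
  · intro M M' w w' h
    refine ⟨_, nty_isNBisim M M' n, ?_⟩
    obtain ⟨f, h1, h2⟩ := WDef.nty_mem n {nty M n w}
    have h3 := (h f h1).1 ((h2 M {w}).2 (by simp))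
    have h4 := (h2 M' {w'}).1 h3 w' rfl
    exact h4.symm
  · intro M M' s s' h
    refine ⟨_, nty_isNBisim M M' n, EM_of_image ?_⟩
    apply Set.Subset.antisymm
    · obtain ⟨f, h1, h2⟩ := WDef.nty_mem n (nty M' n '' s')
      have h3 := (h f h1).2 ((h2 M' s').2 (fun w hw => Set.mem_image_of_mem _ hw))
      rintro _ ⟨w, hw, rfl⟩
      exact (h2 M s).1 h3 w hw
    · obtain ⟨f, h1, h2⟩ := WDef.nty_mem n (nty M n '' s)
      have h3 := (h f h1).1 ((h2 M s).2 (fun w hw => Set.mem_image_of_mem _ hw))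
      rintro _ ⟨w, hw, rfl⟩
      exact (h2 M' s').1 h3 w hw
end
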